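/- arXiv:2410.04532 — 2 statements merged into one kernel-verified Lean document; each statement's English description precedes it below -/
import Mathlib

section
/- Define r* = 5(√2 − 1), and for real r set Z_i(r) = (1/26)( −√(9r² − 20r + 92) + 3r − 38 ) and Z_⋆(r) = −(1 + 2√2) r / 5. Then Z_i(r*) = Z_⋆(r*), and there exists ε > 0 such that for all r with r* − ε < r < r*: Z_i(r) < Z_⋆(r) < 0. -/
noncomputable section

/-- The critical self-similarity exponent `r* = 5(√2 − 1)`. -/
def rstar : ℝ := 5 * (Real.sqrt 2 - 1)

/-- `Z_i(r) = (1/26)(−√(9r² − 20r + 92) + 3r − 38)`, the `Z`-coordinate of the intersection of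
the branch of `N_W = 0` with the line `D_Z = 0`. -/
def Zi (r : ℝ) : ℝ := (1 / 26) * (-Real.sqrt (9 * r ^ 2 - 20 * r + 92) + 3 * r - 38)

/-- `Z_⋆(r) = −(1 + 2√2)r/5`, the `Z`-coordinate of `P_⋆`. -/
def Zstar (r : ℝ) : ℝ := -(1 + 2 * Real.sqrt 2) * r / 5

/-!
`Z_i` is nondecreasing, because `9r² − 20r + 92 = u² + 728/9` with `u = 3r − 10/3`, and
`u − √(u² + c)` is nondecreasing in `u` for `c ≥ 0`. `Z_⋆` is linear with negative slope. Both
take the value `√2 − 3` at `r*`, so `r*` is their only crossing and `Z_i < Z_⋆` exactly to its left.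
-/

theorem lt_iff_lt_of_monotone_of_strictAnti {α β : Type*} [LinearOrder α] [Preorder β]
    {f g : α → β} {a : α} (hf : Monotone f) (hg : StrictAnti g) (ha : f a = g a) {x : α} :
    f x < g x ↔ x < a := by
  constructor
  · contrapose!
    intro hx hlt
    exact hlt.not_ge ((hg.antitone hx).trans (ha.ge.trans (hf hx)))
  · intro hx
    calc
      f x ≤ f a := hf hx.le
      _ = g a := ha
      _ < g x := hg hx

theorem monotone_sub_sqrt_sq_add {c : ℝ} (hc : 0 ≤ c) :
    Monotone fun u : ℝ ↦ u - √(u ^ 2 + c) := by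
  intro u v huv
  have hu : u ≤ √(u ^ 2 + c) := Real.le_sqrt_of_sq_le (le_add_of_nonneg_right hc)
  have hsq : √(u ^ 2 + c) ^ 2 = u ^ 2 + c := Real.sq_sqrt (by positivity)
  have hv : √(v ^ 2 + c) ≤ √(u ^ 2 + c) + (v - u) := by
    refine Real.sqrt_le_iff.mpr ⟨add_nonneg (Real.sqrt_nonneg _) (sub_nonneg.mpr huv), ?_⟩
    calc
      v ^ 2 + c = (u ^ 2 + c) + 2 * (u * (v - u)) + (v - u) ^ 2 := by ring
      _ ≤ (u ^ 2 + c) + 2 * (√(u ^ 2 + c) * (v - u)) + (v - u) ^ 2 := by gcongr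
      _ = (√(u ^ 2 + c) + (v - u)) ^ 2 := by linear_combination -hsq
  dsimp only
  linarith

theorem Zi_monotone : Monotone Zi := by
  intro r t hrt
  have radicand_eq (x : ℝ) : 9 * x ^ 2 - 20 * x + 92 = (3 * x - 10 / 3) ^ 2 + 728 / 9 := by ring
  have h := monotone_sub_sqrt_sq_add (c := 728 / 9) (by norm_num)
    (show 3 * r - 10 / 3 ≤ 3 * t - 10 / 3 by linarith)
  simp only [← radicand_eq] at h
  unfold Zi
  linarith

theorem Zstar_strictAnti : StrictAnti Zstar := by
  intro r t hrt
  have h : (1 + 2 * √2) * r < (1 + 2 * √2) * t := by gcongr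
  unfold Zstar
  linarith

theorem Zstar_zero : Zstar 0 = 0 := by
  simp only [Zstar, mul_zero, zero_div]

theorem Zstar_neg_iff {r : ℝ} : Zstar r < 0 ↔ 0 < r := by
  simpa only [Zstar_zero] using Zstar_strictAnti.lt_iff_gt (a := r) (b := 0)

theorem rstar_pos : 0 < rstar :=
  mul_pos (by norm_num) (sub_pos.mpr Real.one_lt_sqrt_two)

theorem Zi_rstar : Zi rstar = √2 - 3 := by
  have h2 : √2 ^ 2 = 2 := Real.sq_sqrt zero_le_two
  have hpos : 0 ≤ 25 - 11 * √2 := by linarith [Real.sqrt_two_lt_three_halves]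
  have hsq : 9 * rstar ^ 2 - 20 * rstar + 92 = (25 - 11 * √2) ^ 2 := by
    unfold rstar
    linear_combination 104 * h2
  rw [Zi, hsq, Real.sqrt_sq hpos, rstar]
  ring

theorem Zstar_rstar : Zstar rstar = √2 - 3 := by
  have h2 : √2 ^ 2 = 2 := Real.sq_sqrt zero_le_two
  unfold Zstar rstar
  linear_combination -2 * h2

theorem Zi_rstar_eq_Zstar_rstar : Zi rstar = Zstar rstar :=
  Zi_rstar.trans Zstar_rstar.symm

theorem Zi_lt_Zstar_iff {r : ℝ} : Zi r < Zstar r ↔ r < rstar :=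
  lt_iff_lt_of_monotone_of_strictAnti Zi_monotone Zstar_strictAnti Zi_rstar_eq_Zstar_rstar

theorem stmt15_general :
    Zi rstar = Zstar rstar ∧
    ∀ r : ℝ, (Zi r < Zstar r ∧ Zstar r < 0) ↔ r ∈ Set.Ioo 0 rstar :=
  ⟨Zi_rstar_eq_Zstar_rstar, fun _ ↦ (and_congr Zi_lt_Zstar_iff Zstar_neg_iff).trans and_comm⟩

/-- `Z_i(r*) = Z_⋆(r*)`, and `Z_i(r) < Z_⋆(r) < 0` for `r` sufficiently close to
`r*` from below. -/
theorem stmt15 :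
    Zi rstar = Zstar rstar ∧
    ∃ ε : ℝ, 0 < ε ∧ ∀ r : ℝ, rstar - ε < r → r < rstar → Zi r < Zstar r ∧ Zstar r < 0 :=
  ⟨stmt15_general.1, rstar, rstar_pos, fun r hr hr' ↦
    (stmt15_general.2 r).mpr ⟨by simpa only [sub_self] using hr, hr'⟩⟩
end
end

section
/- Define Ξ₁(W,Z) = D_W(W,Z)²·D_Z(W,Z) + (1/4)( N_W(W,Z)·D_Z(W,Z) − N_Z(W,Z)·D_W(W,Z) ), and for real r set ℛ₁ = √(r² − 44r + 92), W₀ = (−3r + 3ℛ₁ + 10)/14, Z₀ = (r − ℛ₁ − 22)/14. Then there exists ε > 0 such that for every r with r* − ε < r < r*, where r* = 5(√2 − 1), and for every real Z > Z₀: Ξ₁(W₀, Z) > 0. -/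
noncomputable section

/-- `ℛ₁ = √(r² − 44r + 92)`. -/
def R1 (r : ℝ) : ℝ := Real.sqrt (r ^ 2 - 44 * r + 92)

/-- `W₀`, the `W`-coordinate of the sonic point `P_s`. -/
def W0 (r : ℝ) : ℝ := (-3 * r + 3 * R1 r + 10) / 14

/-- `Z₀`, the `Z`-coordinate of the sonic point `P_s`. -/
def Z0 (r : ℝ) : ℝ := (r - R1 r - 22) / 14

/-- `D_W(W,Z) = 1 + (3/4)W + (1/4)Z`. -/
def DW (W Z : ℝ) : ℝ := 1 + (3 / 4) * W + (1 / 4) * Z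

/-- `D_Z(W,Z) = 1 + (1/4)W + (3/4)Z`. -/
def DZ (W Z : ℝ) : ℝ := 1 + (1 / 4) * W + (3 / 4) * Z

/-- `N_W(W,Z) = −rW − (13/8)W² − (1/4)WZ + (7/8)Z²`. -/
def NW (r W Z : ℝ) : ℝ := -r * W - (13 / 8) * W ^ 2 - (1 / 4) * W * Z + (7 / 8) * Z ^ 2

/-- `N_Z(W,Z) = −rZ + (7/8)W² − (1/4)WZ − (13/8)Z²`. -/
def NZ (r W Z : ℝ) : ℝ := -r * Z + (7 / 8) * W ^ 2 - (1 / 4) * W * Z - (13 / 8) * Z ^ 2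

/-- `Ξ₁ = D_W²·D_Z + (1/4)(N_W·D_Z − N_Z·D_W)`. -/
def Xi1 (r W Z : ℝ) : ℝ :=
  DW W Z ^ 2 * DZ W Z + (1 / 4) * (NW r W Z * DZ W Z - NZ r W Z * DW W Z)

/-!
At a point where `D_Z = N_Z = 0`, `W` and `r` are functions of `z`: `W = -4 - 3z` and
`z r = 7z² + 22z + 14`. The sonic point is the smaller root of this last equation for given `r`,
and the product of the roots is `2`, so `Z₀ ≤ -√2` or `0 < Z₀ ≤ √2`. On these two ranges the
slope of `Ξ₁(W₀, ·)` at its zero `Z₀` has the sign of `r - (40 - 8√23)`, and a nonnegative slope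
already forces `Ξ₁(W₀, ·) > 0` to the right of `Z₀`. Finally `40 - 8√23 ≈ 1.63 < r* ≈ 2.07`.
-/

/-- `(W, z)` is a sonic point for the exponent `r`: both `D_Z` and `N_Z` vanish there. This keeps
only the two equations that `P_s = (W₀, Z₀)` satisfies, without selecting a root. -/
structure IsSonic (r W z : ℝ) : Prop where
  DZ_eq_zero : DZ W z = 0
  NZ_eq_zero : NZ r W z = 0

/-- The slope `∂_Z Ξ₁` at a sonic point with second coordinate `z`. -/
def sonicSlope (r z : ℝ) : ℝ := (1 / 4) * (r - z * (z + 2) - 2)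

/-- The quotient `Ξ₁(W, z + t) / t` at a sonic point `(W, z)`, as a quadratic in `t`. -/
def sonicQuotient (r z t : ℝ) : ℝ :=
  sonicSlope r z + (1 / 16) * (r - 15 * z - 23) * t + (5 / 16) * t ^ 2

/-- The exponent at which the slope of `Ξ₁(W₀, ·)` at `Z₀` vanishes. -/
def rtangent : ℝ := 40 - 8 * √23

theorem sonicSlope_nonneg_of_forall_sonicQuotient_pos {r z : ℝ}
    (h : ∀ t, 0 < t → 0 < sonicQuotient r z t) : 0 ≤ sonicSlope r z := by
  have hcont : Continuous (sonicQuotient r z) := by unfold sonicQuotient; fun_prop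
  have hzero : 0 ≤ sonicQuotient r z 0 :=
    ContinuousWithinAt.closure_le (s := Set.Ioi 0) (by simp) continuousWithinAt_const
      hcont.continuousWithinAt fun t ht ↦ (h t ht).le
  simpa [sonicQuotient] using hzero

namespace IsSonic

variable {r W z : ℝ}

theorem W_eq (h : IsSonic r W z) : W = -4 - 3 * z := by
  have hD := h.DZ_eq_zero
  unfold DZ at hD
  linarith

theorem mul_r_eq (h : IsSonic r W z) : z * r = 7 * z ^ 2 + 22 * z + 14 := by
  have hN := h.NZ_eq_zero
  rw [h.W_eq] at hN
  unfold NZ at hN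
  linarith

theorem ne_zero (h : IsSonic r W z) : z ≠ 0 := by
  rintro rfl
  have hquad := h.mul_r_eq
  norm_num at hquad

theorem Xi1_eq (h : IsSonic r W z) (Z : ℝ) :
    Xi1 r W Z = (Z - z) * sonicQuotient r z (Z - z) := by
  rw [h.W_eq]
  unfold Xi1 DW DZ NW NZ sonicQuotient sonicSlope
  linear_combination ((Z - z) / 16 + (1 / 4) * (-2 - 9 / 4 * z + Z / 4)) * h.mul_r_eq

theorem mul_sonicSlope (h : IsSonic r W z) :
    z * sonicSlope r z = (1 / 4) * ((z + 1) * (14 + 6 * z - z ^ 2)) := by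
  unfold sonicSlope
  linear_combination (1 / 4) * h.mul_r_eq

theorem mul_linear_coeff (h : IsSonic r W z) :
    z * (r - 15 * z - 23) = 14 - z - 8 * z ^ 2 := by
  linear_combination h.mul_r_eq

theorem mul_sub_rtangent (h : IsSonic r W z) :
    z * (r - rtangent) = (z - 3 + √23) * (7 * z + 3 + √23) := by
  have hs : √23 ^ 2 = 23 := Real.sq_sqrt (by norm_num)
  unfold rtangent
  linear_combination h.mul_r_eq - hs

theorem sonicSlope_mul_eq (h : IsSonic r W z) :
    sonicSlope r z * (7 * z + 3 + √23) =
      (r - rtangent) * ((1 / 4) * ((z + 1) * (3 + √23 - z))) := by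
  have hs : √23 ^ 2 = 23 := Real.sq_sqrt (by norm_num)
  have hfactor : 14 + 6 * z - z ^ 2 = (z - 3 + √23) * (3 + √23 - z) := by
    linear_combination -hs
  refine mul_left_cancel₀ h.ne_zero ?_
  rw [← mul_assoc, ← mul_assoc, h.mul_sonicSlope, h.mul_sub_rtangent, hfactor]
  ring

theorem sonicSlope_nonneg_iff (h : IsSonic r W z) (hz : z ≤ -√2 ∨ 0 < z ∧ z ≤ √2) :
    0 ≤ sonicSlope r z ↔ rtangent ≤ r := by
  have h2 : 1.4 < √2 := Real.lt_sqrt_of_sq_lt (by norm_num)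
  have h2' : √2 < 1.5 := (Real.sqrt_lt' (by norm_num)).2 (by norm_num)
  have h23 : √23 < 5 := (Real.sqrt_lt' (by norm_num)).2 (by norm_num)
  have h23_nonneg : 0 ≤ √23 := Real.sqrt_nonneg 23
  have hfar : 0 < 3 + √23 - z := by rcases hz with hz | ⟨-, hz⟩ <;> linarith
  rw [← sub_nonneg (b := rtangent)]
  rcases hz with hz | ⟨hz, -⟩
  · have hleft : 0 < -(7 * z + 3 + √23) := by linarith
    have hright : 0 < (1 / 4) * (-(z + 1) * (3 + √23 - z)) :=
      mul_pos (by norm_num) (mul_pos (by linarith) hfar)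
    have hmul : sonicSlope r z * -(7 * z + 3 + √23) =
        (r - rtangent) * ((1 / 4) * (-(z + 1) * (3 + √23 - z))) := by
      linear_combination -h.sonicSlope_mul_eq
    rw [← mul_nonneg_iff_of_pos_right hleft, hmul, mul_nonneg_iff_of_pos_right hright]
  · have hleft : 0 < 7 * z + 3 + √23 := by positivity
    have hright : 0 < (1 / 4) * ((z + 1) * (3 + √23 - z)) := by positivity
    rw [← mul_nonneg_iff_of_pos_right hleft, h.sonicSlope_mul_eq,
      mul_nonneg_iff_of_pos_right hright]

theorem sonicQuotient_pos_of_le_neg_sqrt_two (h : IsSonic r W z) (hz : z ≤ -√2)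
    (hslope : 0 ≤ sonicSlope r z) {t : ℝ} (ht : 0 < t) : 0 < sonicQuotient r z t := by
  have h2 : 1.4 < √2 := Real.lt_sqrt_of_sq_lt (by norm_num)
  have hlin : 0 < r - 15 * z - 23 := by
    have hmul : z * (r - 15 * z - 23) < 0 := by
      rw [h.mul_linear_coeff]
      nlinarith
    exact pos_of_mul_neg_right hmul (by linarith)
  unfold sonicQuotient
  positivity

theorem sonicQuotient_pos_of_pos_of_le_sqrt_two (h : IsSonic r W z) (hz : 0 < z) (hz' : z ≤ √2)
    {t : ℝ} (ht : 0 < t) : 0 < sonicQuotient r z t := by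
  have hzsq : z ^ 2 ≤ 2 := (Real.le_sqrt hz.le zero_le_two).1 hz'
  have hslope : 3 < sonicSlope r z := by
    refine lt_of_mul_lt_mul_left ?_ hz.le
    rw [h.mul_sonicSlope]
    nlinarith
  have hlin : -4 < r - 15 * z - 23 := by
    refine lt_of_mul_lt_mul_left ?_ hz.le
    rw [h.mul_linear_coeff]
    nlinarith [sq_nonneg (z - 1)]
  unfold sonicQuotient
  nlinarith [mul_pos (neg_lt_iff_pos_add.1 hlin) ht, sq_nonneg (t - 1)]

theorem forall_sonicQuotient_pos_iff (h : IsSonic r W z) (hz : z ≤ -√2 ∨ 0 < z ∧ z ≤ √2) :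
    (∀ t, 0 < t → 0 < sonicQuotient r z t) ↔ 0 ≤ sonicSlope r z := by
  refine ⟨sonicSlope_nonneg_of_forall_sonicQuotient_pos, fun hslope t ht ↦ ?_⟩
  rcases hz with hz | ⟨hz, hz'⟩
  · exact h.sonicQuotient_pos_of_le_neg_sqrt_two hz hslope ht
  · exact h.sonicQuotient_pos_of_pos_of_le_sqrt_two hz hz' ht

theorem forall_Xi1_pos_iff (h : IsSonic r W z) :
    (∀ Z, z < Z → 0 < Xi1 r W Z) ↔ ∀ t, 0 < t → 0 < sonicQuotient r z t := by
  refine ⟨fun hXi t ht ↦ ?_, fun hq Z hZ ↦ ?_⟩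
  · have hpos := hXi (z + t) (by linarith)
    rw [h.Xi1_eq, add_sub_cancel_left] at hpos
    exact pos_of_mul_pos_right hpos ht.le
  · rw [h.Xi1_eq]
    exact mul_pos (sub_pos.2 hZ) (hq _ (sub_pos.2 hZ))

end IsSonic

theorem isSonic_W0_Z0 {r : ℝ} (hr : 0 ≤ r ^ 2 - 44 * r + 92) : IsSonic r (W0 r) (Z0 r) := by
  have hR : R1 r ^ 2 = r ^ 2 - 44 * r + 92 := Real.sq_sqrt hr
  constructor
  · unfold DZ W0 Z0
    ring
  · unfold NZ W0 Z0
    linear_combination (1 / 28) * hR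

-- `7 (2 - Z₀²) = Z₀ ℛ₁`, because the other root is `2 / Z₀` and the roots differ by `ℛ₁ / 7`.
theorem Z0_le_neg_sqrt_two_or {r : ℝ} (hr : 0 ≤ r ^ 2 - 44 * r + 92) :
    Z0 r ≤ -√2 ∨ 0 < Z0 r ∧ Z0 r ≤ √2 := by
  have hquad := (isSonic_W0_Z0 hr).mul_r_eq
  have hR : R1 r = r - 22 - 14 * Z0 r := by unfold Z0; ring
  have hR_nonneg : 0 ≤ R1 r := Real.sqrt_nonneg _
  have hdiff : 7 * (2 - Z0 r ^ 2) = Z0 r * R1 r := by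
    rw [hR]
    linear_combination -hquad
  rcases lt_trichotomy (Z0 r) 0 with hneg | hzero | hpos
  · left
    have hsq : 2 ≤ (-Z0 r) ^ 2 := by
      nlinarith [mul_nonpos_of_nonpos_of_nonneg hneg.le hR_nonneg]
    exact le_neg.2 ((Real.sqrt_le_left (neg_nonneg.2 hneg.le)).2 hsq)
  · exact absurd hzero (isSonic_W0_Z0 hr).ne_zero
  · right
    have hsq : Z0 r ^ 2 ≤ 2 := by linarith [mul_nonneg hpos.le hR_nonneg]
    exact ⟨hpos, Real.le_sqrt_of_sq_le hsq⟩

theorem rtangent_lt_rstar : rtangent < rstar := by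
  have h2 : 1.4 < √2 := Real.lt_sqrt_of_sq_lt (by norm_num)
  have h23 : 4.79 < √23 := Real.lt_sqrt_of_sq_lt (by norm_num)
  unfold rtangent rstar
  linarith

theorem R1_radicand_pos_of_lt_rstar {r : ℝ} (hr : r < rstar) : 0 < r ^ 2 - 44 * r + 92 := by
  have h2 : √2 < 1.42 := (Real.sqrt_lt' (by norm_num)).2 (by norm_num)
  have hr' : r < 2.1 := by
    unfold rstar at hr
    linarith
  nlinarith

theorem stmt17_general {r : ℝ} (hr : 0 ≤ r ^ 2 - 44 * r + 92) :
    (∀ Z, Z0 r < Z → 0 < Xi1 r (W0 r) Z) ↔ rtangent ≤ r := by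
  have hP := isSonic_W0_Z0 hr
  have hZ0 := Z0_le_neg_sqrt_two_or hr
  rw [hP.forall_Xi1_pos_iff, hP.forall_sonicQuotient_pos_iff hZ0, hP.sonicSlope_nonneg_iff hZ0]

/-- for `r` sufficiently close to `r*` from below, `Ξ₁(W₀, Z) > 0` for all
`Z > Z₀`. -/
theorem stmt17 : ∃ ε : ℝ, 0 < ε ∧ ∀ r : ℝ, rstar - ε < r → r < rstar →
    ∀ Z : ℝ, Z0 r < Z → 0 < Xi1 r (W0 r) Z :=
  ⟨rstar - rtangent, sub_pos.2 rtangent_lt_rstar, fun _ hlo hhi ↦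
    (stmt17_general (R1_radicand_pos_of_lt_rstar hhi).le).2 (by linarith)⟩
end
end
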